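/- The homogeneous polynomial of degree 9 in C[x1,x2,x3] given by F = -109000*x1^6*x2^3 + 1081500*x1^5*x2^4 - 2549250*x1^4*x2^5 + 2244375*x1^3*x2^6 - 144000*x1^6*x2^2*x3 + 2074600*x1^5*x2^3*x3 - 5674500*x1^4*x2^4*x3 + 5284350*x1^3*x2^5*x3 + 358425*x1^2*x2^6*x3 - 48000*x1^6*x2*x3^2 + 1278400*x1^5*x2^2*x3^2 - 4514680*x1^4*x2^3*x3^2 + 4652580*x1^3*x2^4*x3^2 + 312930*x1^2*x2^5*x3^2 + 3645*x1*x2^6*x3^2 + 214400*x1^5*x2*x3^3 - 1482560*x1^4*x2^2*x3^3 + 2009592*x1^3*x2^3*x3^3 - 322956*x1^2*x2^4*x3^3 - 85374*x1*x2^5*x3^3 - 9477*x2^6*x3^3 - 25600*x1^5*x3^4 - 140800*x1^4*x2*x3^4 + 551328*x1^3*x2^2*x3^4 - 411984*x1^2*x2^3*x3^4 - 113616*x1*x2^4*x3^4 - 23328*x2^5*x3^4 + 15360*x1^4*x3^5 + 99072*x1^3*x2*x3^5 - 115776*x1^2*x2^2*x3^5 - 31104*x1*x2^3*x3^5 - 15552*x2^4*x3^5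 - 6656*x1^3*x3^6 - 6912*x1^2*x2*x3^6 + 2592*x1*x2^2*x3^6 - 3024*x2^3*x3^6 is irreducible in the polynomial ring C[x1,x2,x3]. -/

import Mathlib

open MvPolynomial

/-- The variables `x1, x2, x3`. -/
noncomputable def x1 : MvPolynomial (Fin 3) ℂ := X 0
noncomputable def x2 : MvPolynomial (Fin 3) ℂ := X 1
noncomputable def x3 : MvPolynomial (Fin 3) ℂ := X 2

/-- The degree-9 defining equation of the degeneration curve from the paper's
explicit example. -/
noncomputable def Fdeg : MvPolynomial (Fin 3) ℂ :=
  -109000*x1^6*x2^3 + 1081500*x1^5*x2^4 - 2549250*x1^4*x2^5 + 2244375*x1^3*x2^6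
  - 144000*x1^6*x2^2*x3 + 2074600*x1^5*x2^3*x3 - 5674500*x1^4*x2^4*x3
  + 5284350*x1^3*x2^5*x3 + 358425*x1^2*x2^6*x3 - 48000*x1^6*x2*x3^2
  + 1278400*x1^5*x2^2*x3^2 - 4514680*x1^4*x2^3*x3^2 + 4652580*x1^3*x2^4*x3^2
  + 312930*x1^2*x2^5*x3^2 + 3645*x1*x2^6*x3^2 + 214400*x1^5*x2*x3^3
  - 1482560*x1^4*x2^2*x3^3 + 2009592*x1^3*x2^3*x3^3 - 322956*x1^2*x2^4*x3^3
  - 85374*x1*x2^5*x3^3 - 9477*x2^6*x3^3 - 25600*x1^5*x3^4 - 140800*x1^4*x2*x3^4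
  + 551328*x1^3*x2^2*x3^4 - 411984*x1^2*x2^3*x3^4 - 113616*x1*x2^4*x3^4
  - 23328*x2^5*x3^4 + 15360*x1^4*x3^5 + 99072*x1^3*x2*x3^5 - 115776*x1^2*x2^2*x3^5
  - 31104*x1*x2^3*x3^5 - 15552*x2^4*x3^5 - 6656*x1^3*x3^6 - 6912*x1^2*x2*x3^6
  + 2592*x1*x2^2*x3^6 - 3024*x2^3*x3^6


def dig (L n : ℕ) : ℕ := Nat.mod (Nat.div L (Nat.pow 16 n)) 16

def sumTo (f : ℕ → ℕ) : ℕ → ℕ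
  | 0 => 0
  | n + 1 => Nat.add (sumTo f n) (f n)

def allTo (f : ℕ → Bool) : ℕ → Bool
  | 0 => true
  | n + 1 => and (allTo f n) (f n)

/-- exponents of the 37 lattice points of the hexagon -/
def E0 (n : ℕ) : ℕ := dig 142724406302391785960266246771848443860156416 n
def E1 (n : ℕ) : ℕ := dig 69778368706991869189161610454840469672322371 n
/-- exponents of the monomials indexing the equations -/
def D0 (n : ℕ) : ℕ := dig 12818548011645210141035935717008311927037031572016775349657187296696382083294951375050 n
def D1 (n : ℕ) : ℕ := dig 6614651152004773123014000012522775840554628872201955666276667237410612184651766859536 n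

/-- coefficients of F, as a 7 by 7 table -/
def coefTable : List ℤ := [0, 0, 0, -3024, -15552, -23328, -9477, 0, 0, 2592, -31104, -113616, -85374, 3645, 0, -6912, -115776, -411984, -322956, 312930, 358425, -6656, 99072, 551328, 2009592, 4652580, 5284350, 2244375, 15360, -140800, -1482560, -4514680, -5674500, -2549250, 0, -25600, 214400, 1278400, 2074600, 1081500, 0, 0, 0, -48000, -144000, -109000, 0, 0, 0]

def Fc (i j : ℕ) : ℤ :=
  if i ≤ 6 ∧ j ≤ 6 then coefTable.getD (7 * i + j) 0 else 0

def co (d0 d1 n : ℕ) : ℤ :=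
  if E0 n ≤ d0 ∧ E1 n ≤ d1 then Fc (d0 - E0 n) (d1 - E1 n) else 0

/-- the index, among the 74 unknowns, of the three normalised ones -/
def spec (k : ℕ) : ℕ := if k = 71 then 36 else if k = 72 then 21 else 73

def entry (k j : ℕ) : ℤ :=
  if k < 71 then
    if j < 37 then co (D0 k) (D1 k) j * (2 * (E1 j : ℤ) - (D1 k : ℤ))
    else - (co (D0 k) (D1 k) (j - 37) * (2 * (E0 (j - 37) : ℤ) - (D0 k : ℤ)))
  else if j = spec k then 1 else 0

/-- columns of the matrix modulo 11, packed in base 16 -/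
def Mcols : List ℕ := [
  250114078942559915393027686389648661410197418784919348598443746778676354244172032,
  4553907470553063050099246730734895518306726409328534460153628538033837008608100608,
  133396557617300160994976236778979208841544516174424575498683063547291578809720832,
  3561304662828187444826036429135283442487608934182068246086792509763749997080477696,
  19426705599032017974228829863409536483602358508830636639751771822103063513944530354176,
  3885649043538210728402435760377319616097331678305028050495566351123509320531948077056,
  4364949254991041825616878317491066658881116000914944910952878758827729659644346368,
  107458677315291064947399882197069422606012444611055623852214013893839672309710848,
  3824847005612491266140595487083156598936487791002972468393881644070054870028124160,
  3885352620312891672976950967845904594179814012238543602085003191539450175429669814272,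
  3706252033430995409209097145956966058590965669325972375594415606640663372759040,
  1942893089683073489986920524036676216511929192489753714192190823415496544162456535040,
  1662890193599213599599017991329175388307192337213671148070493026552842294956916736,
  59286470217015361221774356900295303529302025802752990552184566077176540305555456,
  2935445261378020779644147129879116856517212328927502795794376426113666632258682880,
  9713344533753571836532431231429167310632207928950271665916942671791913243880301002752,
  5828006698388203944757049266025811096770246178173112423595627522022711025888936329216,
  11656013353355260005844894005157088662788114126139837651920438789561194201177179291648,
  15541351137805832567355695254588151253139254712417116170014499277911234281641667985408,
  319194441657123563918978349673056551903859112373527711880837452461354132164715741184,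
  629849679901310758971849293178416787380888828639501770381867837431608100385919598592,
  497393431426969907297983291474736336661206841806971536816549270841473834297869805289472,
  5828006698586755109119267063262802067625679536362655239890093287441722753756199649280,
  1942668957358779266975642218880852709318784258782602252761393399966798712577714028544,
  14448599886071205032624520279419566473806830911498953626705501804190736491135375507456,
  68296953242310787754825427799343652754702914100143382944205386531929356427474239488,
  485667570432706881530110829651179387331664911750638007201223603460859266785255358464,
  895448942512063840691717857153170112032140819976030348152081358889938611938109947904,
  19426688922370592365378413329963326929064257503445503041254408551118303317521002921984,
  7770675568902916284263647314040717999131249811306636345192262629838893530996489060352,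
  364250417530852436840621269116540572884704731418494718462211899093512813518157512704,
  53119852523564126571521944542625803183268771548048275658661442394970898996293271552,
  895449058302386231785634233932188159427476736852463396150098625599594506170113458176,
  16148435166796874506513763214576262829272527069829167099726781014768491277312105382000,
  288364913689756660030895644691639468015421814968865196677062317548628110480599154688,
  538787075845023454320917068101466531732760153246224871250506303532175727981775290368,
  31097879376344546573485790151430950298635081247765949185268155667470614958305257193472,
  74108746363283440373018974204723748143756311563325458501800957920337665980366848,
  1558138156308015533245590489871791350440335736405221778842779608118505355316559872,
  2150957920488108830422179278739439002500822711160203549158707008195977181426352128,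
  2644926973209037096781240587211969275850063103781075144009235684053016979617873920,
  13598682281765131383098222545485290347007188368213735216536478311582038779000411652096,
  19426688929494296296640756500209203221691465571500142395520787670680218765382291292160,
  474349530580060099496249658627613922292210325136231102229544734152062010476462080,
  948568795101153861310535999422645277431694526133504247002275824954743673227051008,
  1897253382201808856302746051508153892681687288750767564457762502464577438107041792,
  13598684098254416873823662666177803619382333412811248786605943298217650433167835791360,
  9263819672689762100416128825810317922600494767355836622037363074166152029536256,
  15541393751556236142631943070578117279982017478513479083945630113613590672084157071360,
  3484997675965445616527934550608096834835735949691274284155037043423213301331394560,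
  1630935660091354035013853052988933772433056706322802287387745372339082827189452800,
  4062102289601758590607832506072453988425944416948029397947306016185881450787110912,
  36270832122682560740366119251455327661412450240620913904343392133295166717952,
  21739290167269057558069330560950752595363619891749027877936889349166210220032,
  57896488487220025679919071902080346617834403094766054727714120893795707912192,
  971334446112864535459730953411759453321203419526069760625906204869452142602604249088,
  428279968884971030878925064119359441671632490882502711846032674047052189150813880320,
  145132067768755158798679932555878747128200567883840191010647988321681659667769458688,
  9960782899563601989662671429071884936704637913514110434640525783537211598855733248,
  3885337806219345263795382502137124003609672794927591951403784343993430555762851053568,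
  3885337835393744853250208992795436547616983521988300232723860606282871188308172472320,
  15784184749560315554454276807866900958662451275471921416389438503533636291210413867008,
  15177100720513508577183682953195244349318336485268650837145057818134138886759120896,
  242834769449122311362078888538822326458010288163308844637151354514229754438577291264,
  1229346200490466331000448705737537351397839892712624974546629038052517301391982592000,
  11656013353411247403569205795782013704356841038006133193274775204299735143091294699520,
  9713344461128760096130324936263894427418218662643450265156943630969499017028116152320,
  849917640562545826083742462043748890194598692103190726501501019171568327544757288960,
  660203881344104461010064266726641918236907016588806365017443006322289381470227136512,
  280777289673281191570005404606800359418169564035828681651353365743995820248997560320,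
  10684678907496931444361472854978693381190239258147417628234747066424652840799316213763,
  910626043343890871277313747897999813451048190766069780958142952052479888058832912384,
  781620687203622270493686714397791214751985681100211611170267556490056644658764709888,
  7957824397887573655887513307476639108427021303682904407954801467742195123462224190898176]

/-- rows of the inverse matrix modulo 11, packed in base 16 -/
def Nrows : List ℕ := [
  1025799879542596214092563307049742814955126412800975455894782902319423223598724696529160,
  2051516283672623154491625619100826145725996171479327691402571129830311614241616669222917,
  3077227471952965841020521311613995492716715949664159863960552466281712283527139661227266,
  5128655042790113295766326122585783550273939423044038794222535588247662468218352323213575,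
  4009745565219645250676376708807013477310361314020226685326640960541497758465941765162245,
  1802804541020917656042225684222675391186124365834172954782794463720944793901251591378952,
  2548815737068433090098363248607926376578650070439256035655024912281667994545310139552906,
  3263724354111671883996789846033837524619433528314527178725413782634206248982532445276241,
  1802809186025557544561557771120062531407692517651477722708562299297674268256777870616130,
  1181204392357139710453990676805747269481771400085574207561013424491505556008630810192129,
  3201551108808082213671740694053282684332145517546324022142335902852691171764182736930081,
  3201564844274591390494773941218361424097855450077490113854268693496372961112898384693896,
  4631380769365482575322907648279545244186210525485603960261651977143858919134096010904586,
  5221947702902886133356921834229179526208754658653055836039151335759492125141103159021970,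
  2610988004873417300444093204068545296727102583090132145364100858730949380315681134821445,
  4973310284090674238338099389769856100446329137495974652835937373437584702544671137165337,
  2983958937531413670888414993162084063201489693180662306203464676882047923207984332996883,
  3978586617703228935892718483001209168621614130593188629746745579902006992604734969697959,
  1008317022194412162427912126129987282078837174552380421440485294774752441803841510998098,
  4475981001365897757486298953759771034104604909693071122166562531707027189538885856688481,
  2486628341449052175864353936744811102917652641581372809231161154299511683517406644347521,
  497323236409786642155382248146820840100456150797347717440463976893159497012533375533056,
  5159760462403063278250320644730743333431360987718200068103907920968996459386110649852193,
  69041867481642774400175481263046133451009290876367266937336601506661474252290097538,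
  3232613437027729505821209695154492664484111065754078176691789812963281256887983227958627,
  2269093795755824094134225550071644908035660923866220753206165757984485431350646052197025,
  5159771282716315843655650679276663405985374280194174828609505956708213753232421257938266,
  12159400118965087442696010706902415371887594634222028841269833732645198676037280385,
  5035467053547825358719396923960548161946689659020239806323440487713618599114899514353201,
  3729971387641520714992290787862454780897617301419702241933693367472793657683475675096442,
  4165138734953117077106239177058510039527142051710167417679707151721278275702398896342122,
  56125774915312401112300401105985352801579370798341985830375440136037036603754098995,
  4165153087367665846598280456670058761384333477169882952669111401907472403783068264583972,
  128,
  217578915929281655942979733564234117543949565973839626380202989890757280048536468062208,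
  310827022756116651347113905091763025062785094248342323400289985558224685914308336418816,
  31082702275611665134711390509176302506278509424834232340028998555822468563283335970816,
  79571790524834410341729063789769030961470098877604020595192559081946470592989641854646420,
  73199779223793364829176112946112046539247271329017320820517734530217689394750913094689813,
  68413106718835669697670868788990187065489651094688182508318610819390893839070266189505158,
  50913466327451907490657257654030783505284198437878472572967499634452551197727431207157760,
  34999172356554192968338095378561067643289046910313203510147356812938844555233214515475586,
  55700267710565154601858652919661098991959615404611898828579845657618309018596062953484633,
  68941443863066612171074180882100385044879839250591690259848341860670121380964985596384612,
  24928404624890443448855985231138680613739614030734572885998929923402750735811960516329832,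
  59399044048693892072433467263035914089498231510858218001795416240219533870685462810591232,
  32357157604196816498076344496533619352401002965547354891768119697296403091507916162224262,
  11656094250530737694016637258092505696664324987520863837910043281452497303239724706037813,
  7957244126147157163524602416829123064561767708109828848306043671336605217843533353476649,
  58870692658442340599511935558559893736591303580511953795466708098050985519802504838210969,
  74785012635965786323892870297021897116195977873197501210638669378839839767700202504467795,
  84855777212419845817762096090051305842140330729797454288279166057419836453893395385942016,
  13241271071661722426940901022046810484207195079444156717030182147679243248332581925172497,
  41899507371711413511802287218811806946677101060932481562475789707555764573706839591065444,
  29155616770920041445096992081862097353830393319174051072871616603747924028781336857899384,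
  71615404976942943423743454468470938520511472384003878035485917399502835666392092777720483,
  20141607302470486053541086331678627246416514218069667995828377109691536954873518764999530,
  49856710125583803232114476885318062820742344619656934754670941927650122675161992510453600,
  84855777212419845817762096090051305842140330729797454288279166057419836453893393484873728,
  57813844357866275289592683112852732889950519119196810437634812073338400466617996345123447,
  33263174381760580008304869400416416814022647293795814320770352341856565029967534134,
  17499609021443656264010328560862503201755097770938544203854709547504217921079179794322960,
  39785915032245991888339910985811786453521979354332809154738772033909131512329076364965157,
  58870658043764852399494667534639694825941127889795112481429263805616775834811340945724233,
  76879590463749078240117018015848491641951049396765099792129471871872006684389579066,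
  28098793870017427709486831001888625807704407289031161486135386139814945189843196465157171,
  9542422871746132131888528189806980319036973240697423536344597112891613464097253921920035,
  75841855777001517094691560221805595086595158982730636483926138043231584741224024495256138,
  39996132384588642176463697607356770038742938296848631679502448922249421679557162033,
  73199781915620662352947381927139965454960242772911945374635570804553941957015305166350487,
  4,
  60984287257741607203592323855278190138110756998842090045127984601319439067801729553299991,
  81685359855925082420761991842292831301669273332621693993811631647381049757792298703918423,
  7957171782556586274486115970349133441607298412757563479047423630290551952200534008528896]

def Mc (j : ℕ) : ℕ := Mcols.getD j 0
def Nr (i : ℕ) : ℕ := Nrows.getD i 0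

def dotOK (a b : ℕ) (i j : ℕ) : Bool :=
  Nat.beq (Nat.mod (sumTo (fun k => Nat.mul (dig a k) (dig b k)) 74) 11) (cond (Nat.beq i j) 1 0)

theorem prod_ok : allTo (fun i => allTo (fun j => dotOK (Nr i) (Mc j) i j) 74) 74 = true := by
  decide +kernel

theorem entry_ok : allTo (fun k => allTo (fun j => decide (entry k j % 11 = (dig (Mc j) k : ℤ))) 74) 74 = true := by
  decide +kernel

theorem allTo_spec (f : ℕ → Bool) (n : ℕ) (h : allTo f n = true) : ∀ i < n, f i = true := by
  induction n with
  | zero => intro i hi; omega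
  | succ n ih =>
    simp only [allTo, Bool.and_eq_true] at h
    intro i hi
    rcases Nat.lt_succ_iff_lt_or_eq.mp hi with h' | h'
    · exact ih h.1 i h'
    · subst h'; exact h.2

theorem sumTo_eq (f : ℕ → ℕ) (n : ℕ) : sumTo f n = ∑ k ∈ Finset.range n, f k := by
  induction n with
  | zero => rfl
  | succ n ih => rw [Finset.sum_range_succ, ← ih]; rfl

theorem entry_mod (k j : ℕ) (hk : k < 74) (hj : j < 74) :
    ((entry k j : ℤ) : ZMod 11) = ((dig (Mc j) k : ℕ) : ZMod 11) := by
  have h := allTo_spec _ _ (allTo_spec _ _ entry_ok k hk) j hj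
  simp only [decide_eq_true_eq] at h
  have h2 : ((entry k j % 11 : ℤ) : ZMod 11) = ((dig (Mc j) k : ℤ) : ZMod 11) := by rw [h]
  rw [Int.cast_natCast] at h2
  rw [← h2]
  exact ((ZMod.intCast_mod (entry k j) 11)).symm

theorem prod_mod (i j : ℕ) (hi : i < 74) (hj : j < 74) :
    ∑ k ∈ Finset.range 74, ((dig (Nr i) k : ℕ) : ZMod 11) * ((dig (Mc j) k : ℕ) : ZMod 11)
      = if i = j then 1 else 0 := by
  have h := allTo_spec _ _ (allTo_spec _ _ prod_ok i hi) j hj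
  simp only [dotOK, sumTo_eq] at h
  have h1 := Nat.eq_of_beq_eq_true h
  have h2 := congrArg (fun n : ℕ => (n : ZMod 11)) h1
  have h3 : ∀ a : ℕ, ((Nat.mod a 11 : ℕ) : ZMod 11) = (a : ZMod 11) := fun a =>
    ZMod.natCast_mod a 11
  simp only [h3] at h2
  have h4 : ((∑ k ∈ Finset.range 74, Nat.mul (dig (Nr i) k) (dig (Mc j) k) : ℕ) : ZMod 11)
      = ∑ k ∈ Finset.range 74, ((dig (Nr i) k : ℕ) : ZMod 11) * ((dig (Mc j) k : ℕ) : ZMod 11) := by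
    rw [Nat.cast_sum]
    refine Finset.sum_congr rfl fun k _ => ?_
    exact Nat.cast_mul _ _
  rw [← h4, h2]
  by_cases hij : i = j
  · subst hij; simp
  · have : Nat.beq i j = false := by
      rw [Bool.eq_false_iff]; intro h'; exact hij (Nat.eq_of_beq_eq_true h')
    simp [this, hij]

def Mat : Matrix (Fin 74) (Fin 74) ℤ := Matrix.of fun k j => entry k j

theorem Mat_det : Mat.det ≠ 0 := by
  intro h
  have h1 : (Mat.map (Int.castRingHom (ZMod 11))).det = 0 := by
    have := (Int.castRingHom (ZMod 11)).map_det Mat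
    rw [h, map_zero] at this
    exact this.symm
  let N : Matrix (Fin 74) (Fin 74) (ZMod 11) := Matrix.of fun i k => ((dig (Nr i) k : ℕ) : ZMod 11)
  have h2 : N * (Mat.map (Int.castRingHom (ZMod 11))) = 1 := by
    ext i j
    rw [Matrix.mul_apply, Matrix.one_apply]
    have := prod_mod i j i.2 j.2
    rw [Finset.sum_range] at this
    simp only [Fin.ext_iff]
    rw [← this]
    refine Finset.sum_congr rfl fun k _ => ?_
    simp only [N, Mat, Matrix.of_apply, Matrix.map_apply]
    rw [← entry_mod k j k.2 j.2]
    rfl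
  have h3 := congrArg Matrix.det h2
  rw [Matrix.det_mul, h1, mul_zero, Matrix.det_one] at h3
  revert h3
  have : Fact (Nat.Prime 11) := ⟨by norm_num⟩
  exact zero_ne_one

theorem kernel_zero (u : ℕ → ℂ)
    (h : ∀ k < 74, ∑ j ∈ Finset.range 74, (entry k j : ℂ) * u j = 0) : ∀ j < 74, u j = 0 := by
  have hd : (Mat.map (Int.castRingHom ℂ)).det ≠ 0 := by
    have := (Int.castRingHom ℂ).map_det Mat
    intro h0
    have h1 : (Int.castRingHom ℂ) Mat.det = 0 := this.trans h0
    exact Mat_det (by simpa using h1)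
  have h0 := Matrix.eq_zero_of_mulVec_eq_zero hd (v := fun j : Fin 74 => u j) (by
    ext k
    have := h k k.2
    rw [Finset.sum_range] at this
    simpa [Matrix.mulVec, dotProduct, Mat] using this)
  intro j hj
  exact congrFun h0 ⟨j, hj⟩

theorem weight_deg (d : Fin 3 →₀ ℕ) : Finsupp.weight (1 : Fin 3 → ℕ) d = d.degree :=
  (DFunLike.congr_fun (Finsupp.degree_eq_weight_one (R := ℕ)) d).symm

/-- divisors of homogeneous polynomials are homogeneous -/
theorem hom_of_mul {G H : MvPolynomial (Fin 3) ℂ} {n : ℕ} (h0 : G * H ≠ 0)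
    (h : (G * H).IsHomogeneous n) : ∃ m k, m + k = n ∧ G.IsHomogeneous m ∧ H.IsHomogeneous k := by
  have hG : G ≠ 0 := left_ne_zero_of_mul h0
  have hH : H ≠ 0 := right_ne_zero_of_mul h0
  have ht := totalDegree_mul_of_isDomain hG hH
  rw [h.totalDegree h0] at ht
  have ho := MvPowerSeries.order_mul (G : MvPowerSeries (Fin 3) ℂ) (H : MvPowerSeries (Fin 3) ℂ)
  have hn : (n : ℕ∞) ≤ ((G : MvPowerSeries (Fin 3) ℂ) * (H : MvPowerSeries (Fin 3) ℂ)).order := by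
    apply MvPowerSeries.nat_le_order
    intro d hd
    rw [← coe_mul, coeff_coe]
    exact h.coeff_eq_zero hd.ne
  rw [ho] at hn
  have key : ∀ P : MvPolynomial (Fin 3) ℂ, P ≠ 0 →
      (P : MvPowerSeries (Fin 3) ℂ).order ≤ P.totalDegree := by
    intro P hP
    obtain ⟨d, hd⟩ := ne_zero_iff.mp hP
    refine (MvPowerSeries.order_le (d := d) (by rwa [coeff_coe])).trans ?_
    have := le_totalDegree (mem_support_iff.mpr hd)
    exact_mod_cast this
  have k1 := key G hG
  have k2 := key H hH
  lift (G : MvPowerSeries (Fin 3) ℂ).order to ℕ using (ne_top_of_le_ne_top (by simp) k1) with a ha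
  lift (H : MvPowerSeries (Fin 3) ℂ).order to ℕ using (ne_top_of_le_ne_top (by simp) k2) with b hb
  norm_cast at hn k1 k2
  have key2 : ∀ P : MvPolynomial (Fin 3) ℂ,
      (P.totalDegree : ℕ∞) ≤ (P : MvPowerSeries (Fin 3) ℂ).order → P.IsHomogeneous P.totalDegree := by
    intro P hP
    rw [IsHomogeneous, IsWeightedHomogeneous]
    intro d hd
    rw [weight_deg]
    apply le_antisymm
    · exact le_totalDegree (mem_support_iff.mpr hd)
    · have := hP.trans (MvPowerSeries.order_le (d := d) (by rwa [coeff_coe]))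
      exact_mod_cast this
  refine ⟨G.totalDegree, H.totalDegree, ht.symm, key2 G ?_, key2 H ?_⟩
  · rw [← ha]; norm_cast; omega
  · rw [← hb]; norm_cast; omega

noncomputable def th (i : Fin 3) (P : MvPolynomial (Fin 3) ℂ) : MvPolynomial (Fin 3) ℂ :=
  X i * pderiv i P

theorem coeff_th (i : Fin 3) (P : MvPolynomial (Fin 3) ℂ) (d : Fin 3 →₀ ℕ) :
    coeff d (th i P) = (d i : ℂ) * coeff d P := by
  rw [th]
  induction P using MvPolynomial.induction_on' with
  | monomial m r =>
    rw [X_mul_pderiv_monomial, coeff_smul, coeff_monomial]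
    split_ifs with h
    · subst h; simp
    · simp
  | add p q hp hq => simp only [map_add, mul_add, coeff_add, hp, hq]

theorem th_mul (i : Fin 3) (P Q : MvPolynomial (Fin 3) ℂ) :
    th i (P * Q) = th i P * Q + P * th i Q := by
  simp only [th, pderiv_mul]; ring

theorem th_comm (i j : Fin 3) (P : MvPolynomial (Fin 3) ℂ) : th i (th j P) = th j (th i P) := by
  ext d; simp only [coeff_th]; ring

theorem th_hom (i : Fin 3) {P : MvPolynomial (Fin 3) ℂ} {n : ℕ} (h : P.IsHomogeneous n) :
    (th i P).IsHomogeneous n := by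
  intro d hd
  rw [coeff_th] at hd
  exact h (right_ne_zero_of_mul hd)

theorem th_degreeOf (i j : Fin 3) (P : MvPolynomial (Fin 3) ℂ) :
    degreeOf j (th i P) ≤ degreeOf j P := by
  rw [degreeOf_le_iff]
  intro d hd
  rw [mem_support_iff, coeff_th] at hd
  exact degreeOf_le_iff.mp le_rfl d (mem_support_iff.mpr (right_ne_zero_of_mul hd))

theorem key_identity (G H : MvPolynomial (Fin 3) ℂ) :
    (G * H) * th 1 (th 0 G * H) - (th 0 G * H) * th 1 (G * H)
      = (G * H) * th 0 (th 1 G * H) - (th 1 G * H) * th 0 (G * H) := by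
  simp only [th_mul, th_comm 1 0 G]
  ring

noncomputable def mm (i j k : ℕ) : Fin 3 →₀ ℕ :=
  Finsupp.single 0 i + Finsupp.single 1 j + Finsupp.single 2 k

@[simp] theorem mm_0 (i j k : ℕ) : mm i j k 0 = i := by simp [mm]
@[simp] theorem mm_1 (i j k : ℕ) : mm i j k 1 = j := by simp [mm]
@[simp] theorem mm_2 (i j k : ℕ) : mm i j k 2 = k := by simp [mm]

theorem mm_ext (d : Fin 3 →₀ ℕ) (i j k : ℕ) : d = mm i j k ↔ d 0 = i ∧ d 1 = j ∧ d 2 = k := by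
  constructor
  · rintro rfl; simp
  · rintro ⟨h0, h1, h2⟩
    ext t; fin_cases t <;> simp [h0, h1, h2]

noncomputable def mv (n : ℕ) : Fin 3 →₀ ℕ := mm (E0 n) (E1 n) (9 - E0 n - E1 n)

theorem E_le : ∀ n < 37, E0 n + E1 n ≤ 9 := by decide +kernel

theorem E_surj : ∀ i < 7, ∀ j < 7, 3 ≤ i + j → i + j ≤ 9 → ∃ n < 37, E0 n = i ∧ E1 n = j := by
  decide +kernel

theorem E_inj : ∀ n < 37, ∀ m < 37, E0 n = E0 m → E1 n = E1 m → n = m := by decide +kernel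

theorem Fc_zero_aux : ∀ i < 7, ∀ j < 7, Fc i j ≠ 0 → ∃ n < 37, E0 n = i ∧ E1 n = j := by
  decide +kernel

theorem Fc_ne (i j : ℕ) (h : Fc i j ≠ 0) : ∃ n < 37, E0 n = i ∧ E1 n = j := by
  by_cases h' : i ≤ 6 ∧ j ≤ 6
  · exact Fc_zero_aux i (by omega) j (by omega) h
  · exact absurd (by rw [Fc, if_neg h']) h

theorem mv_inj {n m : ℕ} (hn : n < 37) (hm : m < 37) (h : mv n = mv m) : n = m := by
  rw [mv, mv, mm_ext] at h
  simp only [mm_0, mm_1] at h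
  exact E_inj n hn m hm h.1 h.2.1

theorem expand (A : MvPolynomial (Fin 3) ℂ) (hA : A.IsHomogeneous 9)
    (hd : ∀ i, degreeOf i A ≤ 6) :
    A = ∑ n ∈ Finset.range 37, monomial (mv n) (coeff (mv n) A) := by
  ext d
  rw [coeff_sum]
  simp only [coeff_monomial]
  by_cases h : coeff d A = 0
  · rw [h, eq_comm]
    apply Finset.sum_eq_zero
    intro n _
    split_ifs with h'
    · rw [h', h]
    · rfl
  · have hs := mem_support_iff.mpr h
    have h0 := degreeOf_le_iff.mp (hd 0) d hs
    have h1 := degreeOf_le_iff.mp (hd 1) d hs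
    have h2 := degreeOf_le_iff.mp (hd 2) d hs
    have h3 := hA h
    rw [weight_deg, Finsupp.degree_eq_sum, Fin.sum_univ_three] at h3
    obtain ⟨n, hn, e0, e1⟩ := E_surj (d 0) (by omega) (d 1) (by omega) (by omega) (by omega)
    have hdn : d = mv n := by rw [mv, mm_ext]; omega
    rw [Finset.sum_eq_single n]
    · rw [if_pos hdn.symm, hdn]
    · intro m hm hmn
      rw [if_neg]
      rw [hdn]
      intro h'
      exact hmn (mv_inj (Finset.mem_range.mp hm) hn h')
    · intro h'; exact absurd (Finset.mem_range.mpr hn) h'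

theorem Fdeg_expand :
    Fdeg = ∑ n ∈ Finset.range 37, monomial (mv n) ((Fc (E0 n) (E1 n) : ℤ) : ℂ) := by
  have hmon : ∀ n, ∀ r : ℂ, (monomial (mv n) r : MvPolynomial (Fin 3) ℂ)
      = C r * x1 ^ E0 n * x2 ^ E1 n * x3 ^ (9 - E0 n - E1 n) := by
    intro n r
    rw [mv, mm, x1, x2, x3, X_pow_eq_monomial, X_pow_eq_monomial, X_pow_eq_monomial,
      C_mul_monomial, monomial_mul, monomial_mul]
    simp
  have hdig : ∀ L n, dig L n = L / 16 ^ n % 16 := fun L n => rfl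
  simp only [hmon, Finset.sum_range_succ, Finset.sum_range_zero, E0, E1, hdig, Fc, coefTable]
  norm_num
  rw [Fdeg]
  have hC : ∀ k : ℕ, [k.AtLeastTwo] → (C (OfNat.ofNat k : ℂ) : MvPolynomial (Fin 3) ℂ)
      = OfNat.ofNat k := fun k _ => map_ofNat C k
  simp only [hC]
  ring

theorem mv_degree (n : ℕ) (hn : n < 37) : (mv n).degree = 9 := by
  rw [Finsupp.degree_eq_sum, Fin.sum_univ_three, mv]
  have := E_le n hn
  simp only [mm_0, mm_1, mm_2]; omega

theorem Fdeg_hom : Fdeg.IsHomogeneous 9 := by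
  rw [Fdeg_expand]
  apply IsHomogeneous.sum
  intro n hn
  exact isHomogeneous_monomial _ (mv_degree n (Finset.mem_range.mp hn))

theorem coeff_Fdeg (n : ℕ) (hn : n < 37) : coeff (mv n) Fdeg = ((Fc (E0 n) (E1 n) : ℤ) : ℂ) := by
  rw [Fdeg_expand, coeff_sum]
  simp only [coeff_monomial]
  rw [Finset.sum_eq_single n]
  · rw [if_pos rfl]
  · intro m hm hmn
    rw [if_neg]
    intro h'
    exact hmn (mv_inj (Finset.mem_range.mp hm) hn h')
  · intro h'; exact absurd (Finset.mem_range.mpr hn) h'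

theorem E_le6 : ∀ n < 37, E0 n ≤ 6 ∧ E1 n ≤ 6 ∧ 9 - E0 n - E1 n ≤ 6 := by decide +kernel

theorem Fdeg_degreeOf (i : Fin 3) : degreeOf i Fdeg ≤ 6 := by
  rw [degreeOf_le_iff]
  intro d hd
  rw [mem_support_iff, Fdeg_expand, coeff_sum] at hd
  obtain ⟨n, hn, h⟩ := Finset.exists_ne_zero_of_sum_ne_zero hd
  rw [coeff_monomial] at h
  have h' : mv n = d := by
    by_contra h'
    exact h (if_neg h')
  have := E_le6 n (Finset.mem_range.mp hn)
  rw [← h', mv]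
  fin_cases i
  · simpa using this.1
  · simpa using this.2.1
  · simpa using this.2.2

theorem th_monomial (i : Fin 3) (d : Fin 3 →₀ ℕ) (r : ℂ) :
    th i (monomial d r) = monomial d ((d i : ℂ) * r) := by
  ext e
  rw [coeff_th, coeff_monomial, coeff_monomial]
  split_ifs with h
  · rw [h]
  · rw [mul_zero]

theorem th_sum (i : Fin 3) (s : Finset ℕ) (f : ℕ → MvPolynomial (Fin 3) ℂ) :
    th i (∑ n ∈ s, f n) = ∑ n ∈ s, th i (f n) := by
  simp only [th, map_sum, Finset.mul_sum]

theorem co_sum (d0 d1 n : ℕ) :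
    ∑ m ∈ Finset.range 37, (if E0 n + E0 m = d0 ∧ E1 n + E1 m = d1 then
      ((Fc (E0 m) (E1 m) : ℤ) : ℂ) else 0) = (co d0 d1 n : ℂ) := by
  rw [co]
  by_cases h : E0 n ≤ d0 ∧ E1 n ≤ d1
  · rw [if_pos h]
    by_cases hF : Fc (d0 - E0 n) (d1 - E1 n) = 0
    · rw [hF]
      rw [Int.cast_zero]
      apply Finset.sum_eq_zero
      intro m _
      split_ifs with h'
      · have e0 : E0 m = d0 - E0 n := by omega
        have e1 : E1 m = d1 - E1 n := by omega
        rw [e0, e1, hF, Int.cast_zero]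
      · rfl
    · obtain ⟨m, hm, e0, e1⟩ := Fc_ne _ _ hF
      rw [Finset.sum_eq_single m]
      · rw [if_pos (by omega), e0, e1]
      · intro k hk hkm
        rw [if_neg]
        intro h'
        exact hkm (E_inj k (Finset.mem_range.mp hk) m hm (by omega) (by omega))
      · intro h'; exact absurd (Finset.mem_range.mpr hm) h'
  · rw [if_neg h, Int.cast_zero]
    apply Finset.sum_eq_zero
    intro m _
    rw [if_neg]
    omega

theorem lin_eq (a b : ℕ → ℂ) (A B : MvPolynomial (Fin 3) ℂ)
    (hA : A = ∑ n ∈ Finset.range 37, monomial (mv n) (a n))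
    (hB : B = ∑ n ∈ Finset.range 37, monomial (mv n) (b n))
    (h : Fdeg * th 1 A - A * th 1 Fdeg = Fdeg * th 0 B - B * th 0 Fdeg) (d0 d1 : ℕ)
    (hd : d0 + d1 ≤ 18) :
    ∑ n ∈ Finset.range 37, ((co d0 d1 n : ℂ) * (2 * (E1 n : ℂ) - d1) * a n
      - (co d0 d1 n : ℂ) * (2 * (E0 n : ℂ) - d0) * b n) = 0 := by
  have h1 : Fdeg * th 1 A - A * th 1 Fdeg - (Fdeg * th 0 B - B * th 0 Fdeg) = 0 := by
    rw [h, sub_self]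
  have h2 : Fdeg * th 1 A - A * th 1 Fdeg - (Fdeg * th 0 B - B * th 0 Fdeg) =
      ∑ n ∈ Finset.range 37, ∑ m ∈ Finset.range 37, monomial (mv n + mv m)
        (((Fc (E0 m) (E1 m) : ℤ) : ℂ) * (((E1 n : ℂ) - E1 m) * a n - ((E0 n : ℂ) - E0 m) * b n)) := by
    have e1 : ∀ n, mv n 1 = E1 n := fun n => by simp [mv]
    have e0 : ∀ n, mv n 0 = E0 n := fun n => by simp [mv]
    rw [hA, hB, Fdeg_expand]
    simp only [th_sum, th_monomial, e0, e1]
    rw [mul_comm (∑ n ∈ Finset.range 37, monomial (mv n) ((Fc (E0 n) (E1 n) : ℤ) : ℂ)),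
      mul_comm (∑ n ∈ Finset.range 37, monomial (mv n) ((Fc (E0 n) (E1 n) : ℤ) : ℂ))]
    simp only [Finset.sum_mul_sum, ← Finset.sum_sub_distrib, monomial_mul, ← map_sub]
    refine Finset.sum_congr rfl fun n _ => Finset.sum_congr rfl fun m _ => ?_
    congr 1
    ring
  rw [h2] at h1
  have h3 := congrArg (coeff (mm d0 d1 (18 - d0 - d1))) h1
  rw [coeff_zero, coeff_sum] at h3
  rw [← h3]
  refine Finset.sum_congr rfl fun n hn => ?_
  rw [coeff_sum, ← co_sum, Finset.sum_mul, Finset.sum_mul, Finset.sum_mul, Finset.sum_mul,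
    ← Finset.sum_sub_distrib]
  refine Finset.sum_congr rfl fun m hm => ?_
  rw [coeff_monomial]
  have l1 := E_le n (Finset.mem_range.mp hn)
  have l2 := E_le m (Finset.mem_range.mp hm)
  have hiff : mv n + mv m = mm d0 d1 (18 - d0 - d1) ↔ E0 n + E0 m = d0 ∧ E1 n + E1 m = d1 := by
    rw [mm_ext]
    simp only [Finsupp.add_apply, mv, mm_0, mm_1, mm_2]
    omega
  by_cases hc : E0 n + E0 m = d0 ∧ E1 n + E1 m = d1
  · rw [if_pos hc, if_pos (hiff.mpr hc), ← hc.1, ← hc.2]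
    push_cast; ring
  · rw [if_neg hc, if_neg (fun h' => hc (hiff.mp h'))]
    ring

theorem th_lin (i : Fin 3) (P Q R : MvPolynomial (Fin 3) ℂ) (c e : ℂ) :
    th i (P - C c * Q - C e * R) = th i P - C c * th i Q - C e * th i R := by
  simp only [th, map_sub, pderiv_C_mul]; ring

theorem D_le : ∀ k < 71, D0 k + D1 k ≤ 18 := by decide +kernel

theorem lin_unique (A B : MvPolynomial (Fin 3) ℂ) (hA : A.IsHomogeneous 9)
    (hB : B.IsHomogeneous 9) (hdA : ∀ i, degreeOf i A ≤ 6) (hdB : ∀ i, degreeOf i B ≤ 6)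
    (h : Fdeg * th 1 A - A * th 1 Fdeg = Fdeg * th 0 B - B * th 0 Fdeg) :
    ∃ c e f : ℂ, A = C c * th 0 Fdeg + C e * Fdeg ∧ B = C c * th 1 Fdeg + C f * Fdeg := by
  obtain ⟨c, e, f, h1, h2, h3⟩ : ∃ c e f : ℂ,
      coeff (mv 36) A - c * (6 * (-109000)) - e * (-109000) = 0 ∧
      coeff (mv 21) A - c * (3 * 2244375) - e * 2244375 = 0 ∧
      coeff (mv 36) B - c * (3 * (-109000)) - f * (-109000) = 0 := by
    set p := coeff (mv 36) A
    set q := coeff (mv 21) A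
    set r := coeff (mv 36) B
    refine ⟨(p / (-109000) - q / 2244375) / 3,
      p / (-109000) - 6 * ((p / (-109000) - q / 2244375) / 3),
      r / (-109000) - 3 * ((p / (-109000) - q / 2244375) / 3), ?_, ?_, ?_⟩ <;> ring
  set A' := A - C c * th 0 Fdeg - C e * Fdeg with hA'
  set B' := B - C c * th 1 Fdeg - C f * Fdeg with hB'
  have homA : A'.IsHomogeneous 9 := (hA.sub ((th_hom 0 Fdeg_hom).C_mul c)).sub (Fdeg_hom.C_mul e)
  have homB : B'.IsHomogeneous 9 := (hB.sub ((th_hom 1 Fdeg_hom).C_mul c)).sub (Fdeg_hom.C_mul f)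
  have deg_aux : ∀ (P Q R : MvPolynomial (Fin 3) ℂ) (s t : ℂ) (i : Fin 3), degreeOf i P ≤ 6 →
      degreeOf i Q ≤ 6 → degreeOf i R ≤ 6 → degreeOf i (P - C s * Q - C t * R) ≤ 6 := by
    intro P Q R s t i hP hQ hR
    refine (degreeOf_sub_le _ _ _).trans (max_le ((degreeOf_sub_le _ _ _).trans (max_le hP ?_)) ?_)
    · exact (degreeOf_C_mul_le _ _ _).trans hQ
    · exact (degreeOf_C_mul_le _ _ _).trans hR
  have degA : ∀ i, degreeOf i A' ≤ 6 := fun i => deg_aux _ _ _ _ _ i (hdA i)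
    ((th_degreeOf _ _ _).trans (Fdeg_degreeOf i)) (Fdeg_degreeOf i)
  have degB : ∀ i, degreeOf i B' ≤ 6 := fun i => deg_aux _ _ _ _ _ i (hdB i)
    ((th_degreeOf _ _ _).trans (Fdeg_degreeOf i)) (Fdeg_degreeOf i)
  have h' : Fdeg * th 1 A' - A' * th 1 Fdeg = Fdeg * th 0 B' - B' * th 0 Fdeg := by
    rw [hA', hB', th_lin, th_lin, th_comm 0 1 Fdeg]
    linear_combination h
  have xA := expand A' homA degA
  have xB := expand B' homB degB
  have cF0 : coeff (mv 36) Fdeg = -109000 := by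
    rw [coeff_Fdeg _ (by norm_num)]
    have : Fc (E0 36) (E1 36) = -109000 := by decide +kernel
    rw [this]; norm_num
  have cF1 : coeff (mv 21) Fdeg = 2244375 := by
    rw [coeff_Fdeg _ (by norm_num)]
    have : Fc (E0 21) (E1 21) = 2244375 := by decide +kernel
    rw [this]; norm_num
  have m00 : mv 36 0 = 6 := by rw [mv, mm_0]; decide +kernel
  have m01 : mv 36 1 = 3 := by rw [mv, mm_1]; decide +kernel
  have m10 : mv 21 0 = 3 := by rw [mv, mm_0]; decide +kernel
  have z1 : coeff (mv 36) A' = 0 := by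
    rw [hA', coeff_sub, coeff_sub, coeff_C_mul, coeff_C_mul, coeff_th, cF0, m00]
    exact_mod_cast h1
  have z2 : coeff (mv 21) A' = 0 := by
    rw [hA', coeff_sub, coeff_sub, coeff_C_mul, coeff_C_mul, coeff_th, cF1, m10]
    exact_mod_cast h2
  have z3 : coeff (mv 36) B' = 0 := by
    rw [hB', coeff_sub, coeff_sub, coeff_C_mul, coeff_C_mul, coeff_th, cF0, m01]
    exact_mod_cast h3
  let u : ℕ → ℂ := fun j => if j < 37 then coeff (mv j) A' else coeff (mv (j - 37)) B'
  have hu := kernel_zero u (by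
    intro k hk
    by_cases hk' : k < 71
    · have := lin_eq _ _ A' B' xA xB h' (D0 k) (D1 k) (D_le k hk')
      rw [Finset.sum_sub_distrib] at this
      rw [show 74 = 37 + 37 from rfl, Finset.sum_range_add, ← this, sub_eq_add_neg,
        ← Finset.sum_neg_distrib]
      congr 1
      · refine Finset.sum_congr rfl fun n hn => ?_
        have hn' := Finset.mem_range.mp hn
        simp only [u, entry, if_pos hk', if_pos hn']
        push_cast; ring
      · refine Finset.sum_congr rfl fun n hn => ?_
        have hn' : ¬ (37 + n < 37) := by omega
        simp only [u, entry, if_pos hk', if_neg hn', Nat.add_sub_cancel_left]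
        push_cast; ring
    · have hs : u (spec k) = 0 := by
        obtain rfl | rfl | rfl : k = 71 ∨ k = 72 ∨ k = 73 := by omega
        · exact z1
        · exact z2
        · exact z3
      apply Finset.sum_eq_zero
      intro j _
      simp only [entry, if_neg hk']
      split_ifs with hj
      · rw [hj, hs, mul_zero]
      · simp)
  have hA0 : A' = 0 := by
    rw [xA]
    apply Finset.sum_eq_zero
    intro n hn
    have hn' := Finset.mem_range.mp hn
    have := hu n (by omega)
    simp only [u, if_pos hn'] at this
    rw [this, monomial_zero]
  have hB0 : B' = 0 := by
    rw [xB]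
    apply Finset.sum_eq_zero
    intro n hn
    have hn' := Finset.mem_range.mp hn
    have := hu (37 + n) (by omega)
    simp only [u, if_neg (show ¬ (37 + n < 37) by omega), Nat.add_sub_cancel_left] at this
    rw [this, monomial_zero]
  refine ⟨c, e, f, ?_, ?_⟩
  · linear_combination hA0
  · linear_combination hB0

/-- a smooth point of the curve -/
theorem exists_point : ∃ P : Fin 3 → ℂ, eval P Fdeg = 0 ∧ eval P (th 1 Fdeg) ≠ 0 := by
  obtain ⟨r, hr⟩ : ∃ r : ℂ, 351 * r ^ 3 + 864 * r ^ 2 + 576 * r + 112 = 0 := by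
    obtain ⟨r, hr⟩ := IsAlgClosed.exists_root
      (Polynomial.C (351 : ℂ) * Polynomial.X ^ 3 + Polynomial.C 864 * Polynomial.X ^ 2
        + Polynomial.C 576 * Polynomial.X + Polynomial.C 112)
      (by rw [Polynomial.degree_cubic (by norm_num)]; norm_num)
    exact ⟨r, by simpa [Polynomial.IsRoot] using hr⟩
  have hr0 : r ≠ 0 := by
    rintro rfl
    norm_num at hr
  have hr1 : 1053 * r ^ 2 + 1728 * r + 576 ≠ 0 := by
    intro h1
    have : (1 : ℂ) = 0 := by
      linear_combination (-1055 / 2672 - 117 / 334 * r) * hr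
        + (118 / 1503 + 1823 / 8016 * r + 39 / 334 * r ^ 2) * h1
    exact one_ne_zero this
  refine ⟨![0, r, 1], ?_, ?_⟩
  · simp [Fdeg, x1, x2, x3]
    linear_combination (-27 * r ^ 3) * hr
  · have : eval ![0, r, 1] (th 1 Fdeg) = (-27 * r ^ 4) * (1053 * r ^ 2 + 1728 * r + 576) := by
      have hO : ∀ k : ℕ, [k.AtLeastTwo] →
          pderiv 1 (OfNat.ofNat k : MvPolynomial (Fin 3) ℂ) = 0 := fun k _ => by
        rw [← map_ofNat C k]; exact pderiv_C
      simp [Fdeg, th, x1, x2, x3, pderiv_X, hO]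
      linear_combination (-81 * r ^ 3) * hr
    rw [this]
    exact mul_ne_zero (mul_ne_zero (by norm_num) (pow_ne_zero _ hr0)) hr1

theorem Fdeg_eval_ne (i : Fin 3) : eval (fun j => if j = i then (0 : ℂ) else 1) Fdeg ≠ 0 := by
  fin_cases i <;> simp [Fdeg, x1, x2, x3] <;> norm_num

theorem Fdeg_ne_zero : Fdeg ≠ 0 := by
  intro h
  apply Fdeg_eval_ne 0
  rw [h, map_zero]

theorem unit_of_eigen (G H : MvPolynomial (Fin 3) ℂ) (hF : Fdeg = G * H) {m : ℕ}
    (hG : G.IsHomogeneous m) (e f : ℂ) (h0 : th 0 G = C e * G) (h1 : th 1 G = C f * G) :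
    IsUnit G := by
  have hG0 : G ≠ 0 := left_ne_zero_of_mul (hF ▸ Fdeg_ne_zero)
  obtain ⟨d, hd⟩ := ne_zero_iff.mp hG0
  have key : ∀ d', coeff d' G ≠ 0 → (d' 0 : ℂ) = e ∧ (d' 1 : ℂ) = f := by
    intro d' hd'
    have k0 := congrArg (coeff d') h0
    have k1 := congrArg (coeff d') h1
    rw [coeff_th, coeff_C_mul] at k0 k1
    exact ⟨mul_right_cancel₀ hd' k0, mul_right_cancel₀ hd' k1⟩
  have huniq : ∀ d', coeff d' G ≠ 0 → d' = d := by
    intro d' hd'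
    have a0 : (d' 0 : ℂ) = (d 0 : ℂ) := (key d' hd').1.trans (key d hd).1.symm
    have a1 : (d' 1 : ℂ) = (d 1 : ℂ) := (key d' hd').2.trans (key d hd).2.symm
    have a0' : d' 0 = d 0 := by exact_mod_cast a0
    have a1' : d' 1 = d 1 := by exact_mod_cast a1
    have s1 := hG hd'
    have s2 := hG hd
    rw [weight_deg, Finsupp.degree_eq_sum, Fin.sum_univ_three] at s1 s2
    have a2' : d' 2 = d 2 := by omega
    ext t; fin_cases t
    · exact a0'
    · exact a1'
    · exact a2'
  have hmon : G = monomial d (coeff d G) := by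
    ext d'
    rw [coeff_monomial]
    split_ifs with h
    · rw [h]
    · by_contra h'
      exact h (huniq d' h').symm
  have hd0 : d = 0 := by
    ext i
    by_contra hi
    apply Fdeg_eval_ne i
    rw [hF, map_mul, hmon, eval_monomial, Finsupp.prod_fintype _ _ (fun _ => pow_zero _),
      Finset.prod_eq_zero (Finset.mem_univ i)]
    · simp
    · rw [if_pos rfl, zero_pow hi]
  rw [hmon, hd0]
  exact (isUnit_iff_ne_zero.mpr (hd0 ▸ hd)).map C

theorem unit_of_eval_ne (G H : MvPolynomial (Fin 3) ℂ) (hF : Fdeg = G * H) (P : Fin 3 → ℂ)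
    (hP : eval P Fdeg = 0) (hP1 : eval P (th 1 Fdeg) ≠ 0) (hH : eval P H = 0) : IsUnit G := by
  have hne : G * H ≠ 0 := hF ▸ Fdeg_ne_zero
  have hG0 : G ≠ 0 := left_ne_zero_of_mul hne
  have hH0 : H ≠ 0 := right_ne_zero_of_mul hne
  obtain ⟨m, k, hmk, homG, homH⟩ := hom_of_mul hne (hF ▸ Fdeg_hom)
  have hdeg : ∀ i j, degreeOf j (th i G * H) ≤ 6 := by
    intro i j
    refine (degreeOf_mul_le _ _ _).trans ?_
    refine (Nat.add_le_add_right (th_degreeOf i j G) _).trans ?_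
    rw [← degreeOf_mul_eq hG0 hH0, ← hF]
    exact Fdeg_degreeOf j
  have hid := key_identity G H
  rw [← hF] at hid
  obtain ⟨c, e, f, hA, hB⟩ := lin_unique (th 0 G * H) (th 1 G * H)
    (hmk ▸ (th_hom 0 homG).mul homH) (hmk ▸ (th_hom 1 homG).mul homH) (hdeg 0) (hdeg 1) hid
  have hc : c = 0 := by
    have := congrArg (eval P) hB
    simp only [map_mul, map_add, eval_C, hH, hP, mul_zero, add_zero] at this
    exact (mul_eq_zero.mp this.symm).resolve_right hP1
  subst hc
  refine unit_of_eigen G H hF homG e f ?_ ?_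
  · apply mul_right_cancel₀ hH0
    rw [hA, map_zero, zero_mul, zero_add, hF, mul_assoc]
  · apply mul_right_cancel₀ hH0
    rw [hB, map_zero, zero_mul, zero_add, hF, mul_assoc]

/-- The degeneration curve of the conic bundle in the paper's explicit example is
irreducible: the polynomial `F` is irreducible in `ℂ[x1,x2,x3]`. -/
theorem Fdeg_irreducible : Irreducible Fdeg := by
  obtain ⟨P, hP, hP1⟩ := exists_point
  refine ⟨?_, ?_⟩
  · intro h
    exact (h.map (eval P)).ne_zero hP
  · intro G H hF
    have h0 : eval P G * eval P H = 0 := by rw [← map_mul, ← hF, hP]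
    rcases mul_eq_zero.mp h0 with h | h
    · exact Or.inr (unit_of_eval_ne H G (by rw [hF, mul_comm]) P hP hP1 h)
    · exact Or.inl (unit_of_eval_ne G H hF P hP hP1 h)
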